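/- There exists a smooth even function φ : ℝ → ℝ such that: φ(r) ≥ 0 for all r; φ(r) = r² for |r| ≤ 1; φ(r) = 0 for |r| ≥ 3; and φ''(r) ≤ 2 for all r ∈ ℝ. -/

import Mathlib

/-- Primitive of the smooth transition. -/
noncomputable def virM (t : ℝ) : ℝ := ∫ s in (0:ℝ)..t, Real.smoothTransition s

/-- Second primitive of the smooth transition. -/
noncomputable def virN (t : ℝ) : ℝ := ∫ s in (0:ℝ)..t, virM s

lemma virM_hasDerivAt (t : ℝ) : HasDerivAt virM (Real.smoothTransition t) t :=
  intervalIntegral.integral_hasDerivAt_right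
    (Real.smoothTransition.continuous.intervalIntegrable _ _)
    Real.smoothTransition.continuous.stronglyMeasurable.stronglyMeasurableAtFilter
    Real.smoothTransition.continuousAt

lemma virM_cont : Continuous virM :=
  continuous_iff_continuousAt.2 fun t => (virM_hasDerivAt t).continuousAt

lemma virN_hasDerivAt (t : ℝ) : HasDerivAt virN (virM t) t :=
  intervalIntegral.integral_hasDerivAt_right
    (virM_cont.intervalIntegrable _ _)
    virM_cont.stronglyMeasurable.stronglyMeasurableAtFilter
    virM_cont.continuousAt

lemma virM_contDiff : ContDiff ℝ (⊤ : ℕ∞) virM := by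
  rw [contDiff_infty_iff_deriv]
  refine ⟨fun t => (virM_hasDerivAt t).differentiableAt, ?_⟩
  rw [show deriv virM = Real.smoothTransition from funext fun t => (virM_hasDerivAt t).deriv]
  exact Real.smoothTransition.contDiff

lemma virN_contDiff : ContDiff ℝ (⊤ : ℕ∞) virN := by
  rw [contDiff_infty_iff_deriv]
  refine ⟨fun t => (virN_hasDerivAt t).differentiableAt, ?_⟩
  rw [show deriv virN = virM from funext fun t => (virN_hasDerivAt t).deriv]
  exact virM_contDiff

lemma virM_mono : Monotone virM :=
  monotone_of_deriv_nonneg (fun t => (virM_hasDerivAt t).differentiableAt)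
    fun t => by rw [(virM_hasDerivAt t).deriv]; exact Real.smoothTransition.nonneg t

lemma virM_of_nonpos {t : ℝ} (ht : t ≤ 0) : virM t = 0 := by
  unfold virM
  rw [intervalIntegral.integral_congr (g := fun _ => (0:ℝ))]
  · simp
  · intro s hs
    rw [Set.uIcc_of_ge ht] at hs
    exact Real.smoothTransition.zero_of_nonpos hs.2

lemma virM_nonneg (t : ℝ) : 0 ≤ virM t := by
  rcases le_total t 0 with h | h
  · rw [virM_of_nonpos h]
  · calc (0:ℝ) = virM 0 := (virM_of_nonpos le_rfl).symm
      _ ≤ _ := virM_mono h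

lemma st_symm (s : ℝ) : Real.smoothTransition (1 - s) = 1 - Real.smoothTransition s := by
  have h := Real.smoothTransition.pos_denom s
  unfold Real.smoothTransition
  rw [sub_sub_cancel, add_comm (expNegInvGlue (1 - s))]
  field_simp
  ring

lemma virM_one : virM 1 = 1 / 2 := by
  have h : ∫ s in (0:ℝ)..1, Real.smoothTransition (1 - s) = virM 1 := by
    rw [intervalIntegral.integral_comp_sub_left (fun s => Real.smoothTransition s)]
    simp [virM]
  simp only [st_symm] at h
  rw [intervalIntegral.integral_sub (by simp)
    (Real.smoothTransition.continuous.intervalIntegrable _ _)] at h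
  change _ - virM 1 = _ at h
  simp at h
  linarith

lemma virM_of_one_le {t : ℝ} (ht : 1 ≤ t) : virM t = t - 1 / 2 := by
  have h := intervalIntegral.integral_add_adjacent_intervals
    (Real.smoothTransition.continuous.intervalIntegrable (μ := MeasureTheory.volume) 0 1)
    (Real.smoothTransition.continuous.intervalIntegrable 1 t)
  change virM 1 + _ = virM t at h
  rw [intervalIntegral.integral_congr (a := 1) (g := fun _ => (1:ℝ)), virM_one] at h
  · simp at h
    linarith
  · intro s hs
    rw [Set.uIcc_of_le ht] at hs
    exact Real.smoothTransition.one_of_one_le hs.1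

lemma virN_of_nonpos {t : ℝ} (ht : t ≤ 0) : virN t = 0 := by
  unfold virN
  rw [intervalIntegral.integral_congr (g := fun _ => (0:ℝ))]
  · simp
  · intro s hs
    rw [Set.uIcc_of_ge ht] at hs
    exact virM_of_nonpos hs.2

lemma virN_nonneg (t : ℝ) : 0 ≤ virN t := by
  rcases le_total t 0 with h | h
  · rw [virN_of_nonpos h]
  · exact intervalIntegral.integral_nonneg h fun s _ => virM_nonneg s

lemma virN_one_le : virN 1 ≤ 1 / 2 := by
  have h : virN 1 ≤ ∫ s in (0:ℝ)..1, (1 / 2 : ℝ) :=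
    intervalIntegral.integral_mono_on zero_le_one (virM_cont.intervalIntegrable _ _)
      (by simp) fun s hs => virM_one ▸ virM_mono hs.2
  simpa using h

lemma virN_of_one_le {t : ℝ} (ht : 1 ≤ t) : virN t = virN 1 + t ^ 2 / 2 - t / 2 := by
  have h := intervalIntegral.integral_add_adjacent_intervals
    (virM_cont.intervalIntegrable (μ := MeasureTheory.volume) 0 1)
    (virM_cont.intervalIntegrable 1 t)
  change virN 1 + _ = virN t at h
  rw [intervalIntegral.integral_congr (a := 1) (g := fun s => s - 1 / 2)] at h
  · rw [intervalIntegral.integral_sub (by simp) (by simp)] at h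
    simp at h
    linarith
  · intro s hs
    rw [Set.uIcc_of_le ht] at hs
    exact virM_of_one_le hs.1

/-- One-sided cutoff profile: `r²` for `r ≤ 1`, zero for `r ≥ 3`. -/
noncomputable def virF (r : ℝ) : ℝ :=
  2 * virN (3 - r) + (5 * r - 6 - 2 * virN 1) - virM (5 * r - 11 / 2 - 2 * virN 1)

lemma virF_of_le_two {r : ℝ} (hr : r ≤ 2) :
    virF r = r ^ 2 - virM (5 * r - 11 / 2 - 2 * virN 1) := by
  unfold virF
  rw [virN_of_one_le (t := 3 - r) (by linarith)]
  ring

lemma virF_of_le_one {r : ℝ} (hr : r ≤ 1) : virF r = r ^ 2 := by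
  have := virN_nonneg 1
  rw [virF_of_le_two (by linarith), virM_of_nonpos (by linarith), sub_zero]

lemma virF_of_ge {r : ℝ} (hr : 1 ≤ 5 * r - 11 / 2 - 2 * virN 1) :
    virF r = 2 * virN (3 - r) := by
  unfold virF
  rw [virM_of_one_le hr]
  ring

lemma virF_nonneg (r : ℝ) : 0 ≤ virF r := by
  have h0 := virN_nonneg 1
  have h1 := virN_one_le
  rcases le_total 1 (5 * r - 11 / 2 - 2 * virN 1) with h | h
  · rw [virF_of_ge h]
    have := virN_nonneg (3 - r)
    positivity
  · rcases le_total r 1 with h2 | h2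
    · rw [virF_of_le_one h2]; positivity
    · rw [virF_of_le_two (by linarith)]
      have := virM_mono h
      rw [virM_one] at this
      nlinarith

lemma virF_of_three_le {r : ℝ} (hr : 3 ≤ r) : virF r = 0 := by
  have h1 := virN_one_le
  rw [virF_of_ge (by linarith), virN_of_nonpos (by linarith), mul_zero]

lemma virF_contDiff : ContDiff ℝ (⊤ : ℕ∞) virF := by
  unfold virF
  have h1 : ContDiff ℝ (⊤ : ℕ∞) fun r : ℝ => virN (3 - r) :=
    virN_contDiff.comp (contDiff_const.sub contDiff_id)
  have h2 : ContDiff ℝ (⊤ : ℕ∞) fun r : ℝ => virM (5 * r - 11 / 2 - 2 * virN 1) :=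
    virM_contDiff.comp (by fun_prop)
  fun_prop

/-- The derivative of the profile. -/
noncomputable def virG (r : ℝ) : ℝ :=
  -2 * virM (3 - r) + 5 - 5 * Real.smoothTransition (5 * r - 11 / 2 - 2 * virN 1)

lemma lin_hasDerivAt (c r : ℝ) : HasDerivAt (fun r : ℝ => 5 * r - 11 / 2 - c) 5 r := by
  simpa using (((hasDerivAt_id r).const_mul 5).sub_const (11 / 2)).sub_const c

lemma virF_hasDerivAt (r : ℝ) : HasDerivAt virF (virG r) r := by
  have h1 := (virN_hasDerivAt (3 - r)).comp r ((hasDerivAt_id r).const_sub 3)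
  have h2 := (virM_hasDerivAt _).comp r (lin_hasDerivAt (2 * virN 1) r)
  have h3 : HasDerivAt (fun r : ℝ => 5 * r - 6 - 2 * virN 1) 5 r := by
    simpa using (((hasDerivAt_id r).const_mul 5).sub_const 6).sub_const (2 * virN 1)
  convert! ((h1.const_mul 2).add h3).sub h2 using 1
  unfold virG
  ring

lemma virG_hasDerivAt (r : ℝ) : ∃ g ≤ 2, HasDerivAt virG g r := by
  have h1 := (virM_hasDerivAt (3 - r)).comp r ((hasDerivAt_id r).const_sub 3)
  have hd : Differentiable ℝ Real.smoothTransition :=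
    (Real.smoothTransition.contDiff (n := 1)).differentiable (by simp)
  have h2 := (hd _).hasDerivAt.comp r (lin_hasDerivAt (2 * virN 1) r)
  refine ⟨_, ?_, ((h1.const_mul (-2)).add_const 5).sub (h2.const_mul 5)⟩
  have h3 := Real.smoothTransition.le_one (3 - r)
  have h4 : 0 ≤ deriv Real.smoothTransition (5 * r - 11 / 2 - 2 * virN 1) :=
    Real.smoothTransition.monotone.deriv_nonneg
  linarith

/-- Existence of the cutoff function used in the localized virial identity:
a smooth even function `φ` with `φ ≥ 0`, `φ(r) = r²` for `|r| ≤ 1`, `φ(r) = 0`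
for `|r| ≥ 3`, and `φ'' ≤ 2` everywhere. -/
theorem exists_virial_cutoff :
    ∃ φ : ℝ → ℝ,
      ContDiff ℝ (⊤ : ℕ∞) φ ∧
      (∀ r : ℝ, φ (-r) = φ r) ∧
      (∀ r : ℝ, 0 ≤ φ r) ∧
      (∀ r : ℝ, |r| ≤ 1 → φ r = r ^ 2) ∧
      (∀ r : ℝ, 3 ≤ |r| → φ r = 0) ∧
      (∀ r : ℝ, deriv (deriv φ) r ≤ 2) := by
  have heven : ∀ r : ℝ, virF r + virF (-r) - r ^ 2 = virF |r| := by
    intro r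
    rcases le_total 0 r with h | h
    · rw [abs_of_nonneg h, virF_of_le_one (r := -r) (by linarith)]; ring
    · rw [abs_of_nonpos h, virF_of_le_one (r := r) (by linarith)]; ring
  refine ⟨fun r => virF r + virF (-r) - r ^ 2, ?_, ?_, ?_, ?_, ?_, ?_⟩
  · exact (virF_contDiff.add (virF_contDiff.comp contDiff_neg)).sub (contDiff_id.pow 2)
  · intro r
    simp only [heven, abs_neg]
  · intro r
    simp only [heven]
    exact virF_nonneg _
  · intro r hr
    simp only [heven]
    rw [virF_of_le_one hr, sq_abs]
  · intro r hr
    simp only [heven]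
    exact virF_of_three_le hr
  · intro r
    have hd : deriv (fun r => virF r + virF (-r) - r ^ 2)
        = fun r => virG r - virG (-r) - 2 * r := by
      funext x
      have h2 := (virF_hasDerivAt (-x)).comp x (hasDerivAt_neg x)
      have h := ((virF_hasDerivAt x).add h2).sub (hasDerivAt_pow 2 x)
      refine Eq.trans (HasDerivAt.deriv h) ?_
      simp
      ring
    rw [hd]
    obtain ⟨a, ha, hA⟩ := virG_hasDerivAt r
    obtain ⟨b, hb, hB⟩ := virG_hasDerivAt (-r)
    have h := (hA.sub (hB.comp r (hasDerivAt_neg r))).sub ((hasDerivAt_id r).const_mul 2)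
    refine (HasDerivAt.deriv h).trans_le ?_
    linarith
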